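/- Let A1 ∈ ℍ^{m1×p}, B1 ∈ ℍ^{q1×n}, C1 ∈ ℍ^{m1×n}, A2 ∈ ℍ^{m2×m1}, B2 ∈ ℍ^{q2×q1}, C2 ∈ ℍ^{m2×q1} be quaternion matrices, and define A11 = R_{(A2 A1)} A2, B11 = R_{B1} L_{B2}, C11 = R_{(A2 A1)} (A2 R_{A1} C1 B1⁺ + C2) L_{B2}. Assume R_{A1} C1 L_{B1} = 0, R_{A11} C11 = 0 and C11 L_{B11} = 0. Then quaternion matrices (X1, X2, X3) of sizes p×n, m1×q1, m2×q2 satisfy A1 X1 − X2 B1 = C1 and A2 X2 − X3 B2 = C2 if and only if there exist quaternion matrices W1, W2, W3, W4, W5, W6 of appropriate sizes such that, setting V1 = A11⁺ C11 B11⁺ + L_{A11} W2 + W3 R_{B11} and U1 = (A2 A1)⁺ (C2 + A2 R_{A1} C1 B1⁺ − A2 V1 R_{B1}) + W4 B2 + L_{(A2 A1)} W6, one has X1 = A1⁺ C1 + U1 B1 + L_{A1} W1, X2 = −R_{A1} C1 B1⁺ + A1 U1 + V1 R_{B1}, and X3 = −R_{(A2 A1)} (C2 + A2 R_{A1} C1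 B1⁺ − A2 V1 R_{B1}) B2⁺ + A2 A1 W4 + W5 R_{B2}. -/

import Mathlib

open Matrix

noncomputable section

/-- `Mat a b` is the type of `a × b` matrices over the real quaternions. -/
abbrev Mat (a b : ℕ) := Matrix (Fin a) (Fin b) (Quaternion ℝ)

/-- `Ad` is a Moore–Penrose inverse of `A`: the four Penrose equations hold. -/
def IsMPInv {k l : Type*} [Fintype k] [Fintype l]
    (A : Matrix k l (Quaternion ℝ)) (Ad : Matrix l k (Quaternion ℝ)) : Prop :=
  A * Ad * A = A ∧ Ad * A * Ad = Ad ∧ (A * Ad)ᴴ = A * Ad ∧ (Ad * A)ᴴ = Ad * A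

/-- The projector `L_A = I - A⁺ A`. -/
def Lp {k l : Type*} [Fintype k] [Fintype l] [DecidableEq l]
    (A : Matrix k l (Quaternion ℝ)) (Ad : Matrix l k (Quaternion ℝ)) :
    Matrix l l (Quaternion ℝ) :=
  1 - Ad * A

/-- The projector `R_A = I - A A⁺`. -/
def Rp {k l : Type*} [Fintype k] [Fintype l] [DecidableEq k]
    (A : Matrix k l (Quaternion ℝ)) (Ad : Matrix l k (Quaternion ℝ)) :
    Matrix k k (Quaternion ℝ) :=
  1 - A * Ad

/-!
The general solution of `A1 * X1 - X2 * B1 = C1` has free parameters `U1`, `V1` and `W1`. Inserting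
its `X2` into the second equation leaves an equation of the same shape,
`(A2 * A1) * U1 - X3 * B2 = D V1`, whose right-hand side depends on `V1` alone. It can be solved for
`(U1, X3)` exactly when `R_{A2 A1} * D V1 * L_{B2} = 0`, a condition that rearranges to the
two-sided equation `A11 * V1 * B11 = C11`, and Penrose's formula gives all of its solutions `V1`.
-/

/-- `G` is an inner inverse (also called a `{1}`-inverse) of `A`: for every `b` in the column space
of `A`, the vector `G * b` solves `A * x = b`. -/
def IsInnerInverse {R k l : Type*} [Ring R] [Fintype k] [Fintype l]
    (A : Matrix k l R) (G : Matrix l k R) : Prop :=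
  A * G * A = A

/-- The matrix `1 - G * A`, written `L_A` in the literature. When `G` is an inner inverse of `A`,
it is an idempotent whose range is the kernel of `A` acting on columns. -/
def kerProj {R k l : Type*} [Ring R] [Fintype k] [DecidableEq l]
    (A : Matrix k l R) (G : Matrix l k R) : Matrix l l R :=
  1 - G * A

/-- The matrix `1 - A * G`, written `R_A` in the literature. When `G` is an inner inverse of `A`,
it is an idempotent whose kernel is the column space of `A`. -/
def cokerProj {R k l : Type*} [Ring R] [Fintype l] [DecidableEq k]
    (A : Matrix k l R) (G : Matrix l k R) : Matrix k k R :=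
  1 - A * G

section Projections

variable {R k l m : Type*} [Ring R] [Fintype k] [Fintype l]

theorem kerProj_mul [DecidableEq l] (A : Matrix k l R) (G : Matrix l k R) (X : Matrix l m R) :
    kerProj A G * X = X - G * (A * X) := by
  rw [kerProj, Matrix.sub_mul, Matrix.one_mul, Matrix.mul_assoc]

theorem mul_kerProj [DecidableEq l] (A : Matrix k l R) (G : Matrix l k R) (X : Matrix m l R) :
    X * kerProj A G = X - X * G * A := by
  rw [kerProj, Matrix.mul_sub, Matrix.mul_one, Matrix.mul_assoc]

theorem cokerProj_mul [DecidableEq k] (A : Matrix k l R) (G : Matrix l k R) (X : Matrix k m R) :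
    cokerProj A G * X = X - A * (G * X) := by
  rw [cokerProj, Matrix.sub_mul, Matrix.one_mul, Matrix.mul_assoc]

theorem mul_cokerProj [DecidableEq k] (A : Matrix k l R) (G : Matrix l k R) (X : Matrix m k R) :
    X * cokerProj A G = X - X * A * G := by
  rw [cokerProj, Matrix.mul_sub, Matrix.mul_one, Matrix.mul_assoc]

end Projections

namespace IsInnerInverse

section Annihilation

variable {R k l : Type*} [Ring R] [Fintype k] [Fintype l]
  {A : Matrix k l R} {G : Matrix l k R}

theorem mul_kerProj_self [DecidableEq l] (hA : IsInnerInverse A G) : A * kerProj A G = 0 := by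
  rw [mul_kerProj, hA, sub_self]

theorem cokerProj_mul_self [DecidableEq k] (hA : IsInnerInverse A G) : cokerProj A G * A = 0 := by
  rw [cokerProj_mul, ← Matrix.mul_assoc, hA, sub_self]

end Annihilation

section TwoSidedEquation

variable {R k l m n : Type*} [Ring R] [Fintype k] [Fintype l] [Fintype m] [Fintype n]
  [DecidableEq l] [DecidableEq m]
  {A : Matrix k l R} {G : Matrix l k R} {B : Matrix m n R} {H : Matrix n m R}

theorem mul_mul_eq_zero_iff (hA : IsInnerInverse A G) (hB : IsInnerInverse B H)
    (X : Matrix l m R) :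
    A * X * B = 0 ↔ ∃ V W : Matrix l m R, X = kerProj A G * V + W * cokerProj B H := by
  constructor
  · intro hX
    refine ⟨X, G * (A * X), ?_⟩
    rw [kerProj_mul, mul_cokerProj, Matrix.mul_assoc G, hX, Matrix.mul_zero, Matrix.zero_mul,
      sub_zero, sub_add_cancel]
  · rintro ⟨V, W, rfl⟩
    rw [Matrix.mul_add, Matrix.add_mul, ← Matrix.mul_assoc A, hA.mul_kerProj_self, Matrix.zero_mul,
      Matrix.zero_mul, zero_add, Matrix.mul_assoc, Matrix.mul_assoc, hB.cokerProj_mul_self,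
      Matrix.mul_zero, Matrix.mul_zero]

theorem mul_mul_eq_iff [DecidableEq k] [DecidableEq n]
    (hA : IsInnerInverse A G) (hB : IsInnerInverse B H) (C : Matrix k n R) (X : Matrix l m R) :
    A * X * B = C ↔ (cokerProj A G * C = 0 ∧ C * kerProj B H = 0) ∧
      ∃ V W : Matrix l m R, X = G * C * H + kerProj A G * V + W * cokerProj B H := by
  have of_consistent (hAC : cokerProj A G * C = 0) (hCB : C * kerProj B H = 0) :
      A * X * B = C ↔
        ∃ V W : Matrix l m R, X = G * C * H + kerProj A G * V + W * cokerProj B H := by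
    have particular : A * (G * C * H) * B = C := by
      rw [cokerProj_mul, sub_eq_zero] at hAC
      rw [mul_kerProj, sub_eq_zero] at hCB
      rw [← Matrix.mul_assoc, ← hAC, ← hCB]
    have homogeneous := hA.mul_mul_eq_zero_iff hB (X - G * C * H)
    rw [Matrix.mul_sub, Matrix.sub_mul, particular, sub_eq_zero] at homogeneous
    simp only [homogeneous, sub_eq_iff_eq_add', add_assoc]
  refine ⟨fun hX => ?_, fun ⟨⟨hAC, hCB⟩, hX⟩ => (of_consistent hAC hCB).2 hX⟩
  have hAC : cokerProj A G * C = 0 := by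
    rw [← hX, Matrix.mul_assoc, ← Matrix.mul_assoc, hA.cokerProj_mul_self, Matrix.zero_mul]
  have hCB : C * kerProj B H = 0 := by
    rw [← hX, Matrix.mul_assoc, hB.mul_kerProj_self, Matrix.mul_zero]
  exact ⟨⟨hAC, hCB⟩, (of_consistent hAC hCB).1 hX⟩

end TwoSidedEquation

section SylvesterEquation

variable {R k l m n : Type*} [Ring R] [Fintype k] [Fintype l] [Fintype m] [Fintype n]
  [DecidableEq l] [DecidableEq m]
  {A : Matrix k l R} {G : Matrix l k R} {B : Matrix m n R} {H : Matrix n m R}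

theorem mul_eq_mul_iff (hA : IsInnerInverse A G) (hB : IsInnerInverse B H)
    (X : Matrix l n R) (Y : Matrix k m R) :
    A * X = Y * B ↔
      ∃ (U : Matrix l m R) (V : Matrix k m R) (W : Matrix l n R),
        X = U * B + kerProj A G * W ∧ Y = A * U + V * cokerProj B H := by
  constructor
  · intro hXY
    refine ⟨X * H, Y, X - X * H * B, ?_, ?_⟩
    · have hW : A * (X - X * H * B) = 0 := by
        rw [Matrix.mul_sub, ← Matrix.mul_assoc, ← Matrix.mul_assoc, hXY, Matrix.mul_assoc Y,
          Matrix.mul_assoc Y, hB, sub_self]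
      rw [kerProj_mul, hW, Matrix.mul_zero, sub_zero, add_sub_cancel]
    · rw [mul_cokerProj, ← Matrix.mul_assoc, hXY, add_sub_cancel]
  · rintro ⟨U, V, W, rfl, rfl⟩
    rw [Matrix.mul_add, Matrix.add_mul, ← Matrix.mul_assoc, ← Matrix.mul_assoc,
      hA.mul_kerProj_self, Matrix.mul_assoc V, hB.cokerProj_mul_self, Matrix.zero_mul,
      Matrix.mul_zero]

theorem mul_sub_mul_eq_iff [DecidableEq k] [DecidableEq n]
    (hA : IsInnerInverse A G) (hB : IsInnerInverse B H)
    (C : Matrix k n R) (X : Matrix l n R) (Y : Matrix k m R) :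
    A * X - Y * B = C ↔ cokerProj A G * C * kerProj B H = 0 ∧
      ∃ (U : Matrix l m R) (V : Matrix k m R) (W : Matrix l n R),
        X = G * C + U * B + kerProj A G * W ∧
        Y = -(cokerProj A G * C * H) + A * U + V * cokerProj B H := by
  have of_consistent (hC : cokerProj A G * C * kerProj B H = 0) :
      A * X - Y * B = C ↔ ∃ (U : Matrix l m R) (V : Matrix k m R) (W : Matrix l n R),
        X = G * C + U * B + kerProj A G * W ∧
        Y = -(cokerProj A G * C * H) + A * U + V * cokerProj B H := by
    have particular : A * (G * C) - -(cokerProj A G * C * H) * B = C := by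
      rw [mul_kerProj, sub_eq_zero] at hC
      rw [Matrix.neg_mul, ← hC, cokerProj_mul, sub_neg_eq_add, add_sub_cancel]
    have shift : A * X - Y * B = C ↔
        A * (X - G * C) = (Y - -(cokerProj A G * C * H)) * B := by
      rw [Matrix.mul_sub, Matrix.sub_mul, sub_eq_sub_iff_sub_eq_sub, particular]
    simp only [shift, hA.mul_eq_mul_iff hB, sub_eq_iff_eq_add', add_assoc]
  refine ⟨fun hXY => ?_, fun ⟨hC, hXY⟩ => (of_consistent hC).2 hXY⟩
  have hC : cokerProj A G * C * kerProj B H = 0 := by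
    rw [← hXY, Matrix.mul_sub, ← Matrix.mul_assoc, hA.cokerProj_mul_self, Matrix.zero_mul,
      zero_sub, Matrix.neg_mul, Matrix.mul_assoc, Matrix.mul_assoc, hB.mul_kerProj_self,
      Matrix.mul_zero, Matrix.mul_zero, neg_zero]
  exact ⟨hC, (of_consistent hC).1 hXY⟩

end SylvesterEquation

end IsInnerInverse

theorem stmt_3_general {R m1 p q1 n m2 q2 : Type*} [Ring R]
    [Fintype m1] [Fintype p] [Fintype q1] [Fintype n] [Fintype m2] [Fintype q2]
    [DecidableEq m1] [DecidableEq p] [DecidableEq q1] [DecidableEq n] [DecidableEq m2]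
    [DecidableEq q2]
    {A1 : Matrix m1 p R} {A1d : Matrix p m1 R} (hA1 : IsInnerInverse A1 A1d)
    {B1 : Matrix q1 n R} {B1d : Matrix n q1 R} (hB1 : IsInnerInverse B1 B1d)
    (C1 : Matrix m1 n R) {A2 : Matrix m2 m1 R}
    {B2 : Matrix q2 q1 R} {B2d : Matrix q1 q2 R} (hB2 : IsInnerInverse B2 B2d)
    (C2 : Matrix m2 q1 R)
    {A21 : Matrix m2 p R} (hA21 : A21 = A2 * A1)
    {A21d : Matrix p m2 R} (hA21d : IsInnerInverse A21 A21d)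
    {A11 : Matrix m2 m1 R} (hA11 : A11 = cokerProj A21 A21d * A2)
    {A11d : Matrix m1 m2 R} (hA11d : IsInnerInverse A11 A11d)
    {B11 : Matrix q1 q1 R} (hB11 : B11 = cokerProj B1 B1d * kerProj B2 B2d)
    {B11d : Matrix q1 q1 R} (hB11d : IsInnerInverse B11 B11d)
    {C11 : Matrix m2 q1 R}
    (hC11 : C11 = cokerProj A21 A21d * (A2 * cokerProj A1 A1d * C1 * B1d + C2) * kerProj B2 B2d)
    (X1 : Matrix p n R) (X2 : Matrix m1 q1 R) (X3 : Matrix m2 q2 R) :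
    (A1 * X1 - X2 * B1 = C1 ∧ A2 * X2 - X3 * B2 = C2) ↔
      (cokerProj A1 A1d * C1 * kerProj B1 B1d = 0 ∧
        cokerProj A11 A11d * C11 = 0 ∧ C11 * kerProj B11 B11d = 0) ∧
      ∃ (W1 : Matrix p n R) (W2 : Matrix m1 q1 R) (W3 : Matrix m1 q1 R) (W4 : Matrix p q2 R)
          (W5 : Matrix m2 q2 R) (W6 : Matrix p q1 R) (V1 : Matrix m1 q1 R) (U1 : Matrix p q1 R),
        V1 = A11d * C11 * B11d + kerProj A11 A11d * W2 + W3 * cokerProj B11 B11d ∧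
        U1 = A21d * (C2 + A2 * cokerProj A1 A1d * C1 * B1d - A2 * V1 * cokerProj B1 B1d)
              + W4 * B2 + kerProj A21 A21d * W6 ∧
        X1 = A1d * C1 + U1 * B1 + kerProj A1 A1d * W1 ∧
        X2 = -(cokerProj A1 A1d * C1 * B1d) + A1 * U1 + V1 * cokerProj B1 B1d ∧
        X3 = -(cokerProj A21 A21d *
                (C2 + A2 * cokerProj A1 A1d * C1 * B1d - A2 * V1 * cokerProj B1 B1d) * B2d)
              + A2 * A1 * W4 + W5 * cokerProj B2 B2d := by
  let D (V : Matrix m1 q1 R) : Matrix m2 q1 R :=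
    C2 + A2 * cokerProj A1 A1d * C1 * B1d - A2 * V * cokerProj B1 B1d
  have second_iff (U : Matrix p q1 R) (V : Matrix m1 q1 R)
      (hX2 : X2 = -(cokerProj A1 A1d * C1 * B1d) + A1 * U + V * cokerProj B1 B1d) :
      A2 * X2 - X3 * B2 = C2 ↔ A21 * U - X3 * B2 = D V := by
    have hD : A2 * X2 - C2 = A21 * U - D V := by
      simp only [D, hX2, hA21, Matrix.mul_add, Matrix.mul_neg, Matrix.mul_assoc]
      abel
    rw [sub_eq_iff_eq_add, ← sub_eq_iff_eq_add', hD, sub_eq_iff_eq_add', ← sub_eq_iff_eq_add]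
  have consistent_iff (V : Matrix m1 q1 R) :
      cokerProj A21 A21d * D V * kerProj B2 B2d = 0 ↔ A11 * V * B11 = C11 := by
    have hD : cokerProj A21 A21d * D V * kerProj B2 B2d = C11 - A11 * V * B11 := by
      simp only [D, hC11, hA11, hB11, Matrix.mul_add, Matrix.add_mul, Matrix.mul_sub,
        Matrix.sub_mul, Matrix.mul_assoc]
      abel
    rw [hD, sub_eq_zero, eq_comm]
  constructor
  · rintro ⟨h1, h2⟩
    obtain ⟨hC1, U, V, W1, hX1, hX2⟩ := (hA1.mul_sub_mul_eq_iff hB1 C1 X1 X2).1 h1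
    obtain ⟨hD, W4, W5, W6, hU, hX3⟩ :=
      (hA21d.mul_sub_mul_eq_iff hB2 (D V) U X3).1 ((second_iff U V hX2).1 h2)
    obtain ⟨hC, W2, W3, hV⟩ := (hA11d.mul_mul_eq_iff hB11d C11 V).1 ((consistent_iff V).1 hD)
    exact ⟨⟨hC1, hC⟩, W1, W2, W3, W4, W5, W6, V, U, hV, hU, hX1, hX2, hA21 ▸ hX3⟩
  · rintro ⟨⟨hC1, hC⟩, W1, W2, W3, W4, W5, W6, V, U, hV, hU, hX1, hX2, hX3⟩
    have hD := (consistent_iff V).2 ((hA11d.mul_mul_eq_iff hB11d C11 V).2 ⟨hC, W2, W3, hV⟩)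
    have h2 := (hA21d.mul_sub_mul_eq_iff hB2 (D V) U X3).2
      ⟨hD, W4, W5, W6, hU, hA21 ▸ hX3⟩
    exact ⟨(hA1.mul_sub_mul_eq_iff hB1 C1 X1 X2).2 ⟨hC1, U, V, W1, hX1, hX2⟩,
      (second_iff U V hX2).2 h2⟩

theorem stmt_3 {m1 p q1 n m2 q2 : ℕ}
    (A1 : Mat m1 p) (A1d : Mat p m1) (hA1 : IsMPInv A1 A1d)
    (B1 : Mat q1 n) (B1d : Mat n q1) (hB1 : IsMPInv B1 B1d)
    (C1 : Mat m1 n)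
    (A2 : Mat m2 m1)
    (B2 : Mat q2 q1) (B2d : Mat q1 q2) (hB2 : IsMPInv B2 B2d)
    (C2 : Mat m2 q1)
    (A21 : Mat m2 p) (hA21 : A21 = A2 * A1)
    (A21d : Mat p m2) (hA21d : IsMPInv A21 A21d)
    (A11 : Mat m2 m1) (hA11 : A11 = Rp A21 A21d * A2)
    (A11d : Mat m1 m2) (hA11d : IsMPInv A11 A11d)
    (B11 : Mat q1 q1) (hB11 : B11 = Rp B1 B1d * Lp B2 B2d)
    (B11d : Mat q1 q1) (hB11d : IsMPInv B11 B11d)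
    (C11 : Mat m2 q1)
    (hC11 : C11 = Rp A21 A21d * (A2 * Rp A1 A1d * C1 * B1d + C2) * Lp B2 B2d)
    (hcond1 : Rp A1 A1d * C1 * Lp B1 B1d = 0)
    (hcond2 : Rp A11 A11d * C11 = 0)
    (hcond3 : C11 * Lp B11 B11d = 0)
    (X1 : Mat p n) (X2 : Mat m1 q1) (X3 : Mat m2 q2) :
    (A1 * X1 - X2 * B1 = C1 ∧ A2 * X2 - X3 * B2 = C2) ↔
      (∃ (W1 : Mat p n) (W2 : Mat m1 q1) (W3 : Mat m1 q1) (W4 : Mat p q2)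
          (W5 : Mat m2 q2) (W6 : Mat p q1) (V1 : Mat m1 q1) (U1 : Mat p q1),
        V1 = A11d * C11 * B11d + Lp A11 A11d * W2 + W3 * Rp B11 B11d ∧
        U1 = A21d * (C2 + A2 * Rp A1 A1d * C1 * B1d - A2 * V1 * Rp B1 B1d)
              + W4 * B2 + Lp A21 A21d * W6 ∧
        X1 = A1d * C1 + U1 * B1 + Lp A1 A1d * W1 ∧
        X2 = -(Rp A1 A1d * C1 * B1d) + A1 * U1 + V1 * Rp B1 B1d ∧
        X3 = -(Rp A21 A21d * (C2 + A2 * Rp A1 A1d * C1 * B1d - A2 * V1 * Rp B1 B1d) * B2d)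
              + A2 * A1 * W4 + W5 * Rp B2 B2d) :=
  (stmt_3_general hA1.1 hB1.1 C1 hB2.1 C2 hA21 hA21d.1 hA11 hA11d.1 hB11 hB11d.1 hC11
    X1 X2 X3).trans (and_iff_right ⟨hcond1, hcond2, hcond3⟩)
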